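/- Let n be a positive even integer. Let x_1, …, x_{n/2} : (0,∞) → ℝ be continuous functions such that for every t > 0 one has 0 < x_1(t) < … < x_{n/2}(t) < π/2 and {x ∈ (0,π/2) : Z_{n,t}(x) = 0} = {x_1(t), …, x_{n/2}(t)}. Then each x_k is differentiable on (0,∞) and for every t > 0, x_k′(t) = 2·cot(2x_k(t)) − 2·sin(2x_k(t)) · Σ_{j=1, j≠k}^{n/2} [sin²x_j(t) − sin²x_k(t)]^{−1}. -/

import Mathlib

open scoped Real

noncomputable def spin (b : Bool) : ℝ := if b then 1 else -1

/-- The Curie-Weiss partition function `Z_{n,t}(x)`. -/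
noncomputable def CWZ (n : ℕ) (t x : ℂ) : ℂ :=
  ∑ σ : Fin n → Bool, Complex.exp
    (t * ((∑ j, spin (σ j) : ℝ) : ℂ) ^ 2
      + Complex.I * x * ((∑ j, spin (σ j) : ℝ) : ℂ))

/-!
Each summand of `Z_{n,t}(x)` solves the backward heat equation `∂ₜZ = -∂ₓ²Z`, so implicit
differentiation of `Z_{n,t}(z(t)) = 0` at a simple zero gives `z' = ∂ₓ²Z / ∂ₓZ`. Reversing all
spins turns `Z` into a sum of cosines of `x` times the magnetization, which is even when `n` is;
hence `Z_{n,t}(x) = P(sin² x)` with `deg P ≤ n / 2`. As many distinct roots as the degree determine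
`P` up to a factor, and at a root `uₖ` they give `P'' / P' = 2 ∑ (uₖ - uⱼ)⁻¹`.
-/

open Filter Topology

section Nodal

open Polynomial Lagrange

variable {F ι : Type*} [Field F] {s : Finset ι} {v : ι → F}

theorem eq_leadingCoeff_mul_nodal {P : F[X]} (hv : Set.InjOn v s) (hdeg : P.natDegree ≤ s.card)
    (hroot : ∀ i ∈ s, P.eval (v i) = 0) : P = C P.leadingCoeff * nodal s v := by
  have hdvd : nodal s v ∣ P :=
    Finset.prod_dvd_of_coprime
      (fun i hi j hj hij => isCoprime_X_sub_C_of_isUnit_sub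
        (sub_ne_zero.2 (hv.ne hi hj hij)).isUnit)
      fun i hi => dvd_iff_isRoot.2 (hroot i hi)
  exact eq_leadingCoeff_mul_of_monic_of_dvd_of_natDegree_le nodal_monic hdvd
    (by rwa [natDegree_nodal])

theorem eval_derivative_nodal_of_forall_ne {x : F} (hx : ∀ i ∈ s, x ≠ v i) :
    (derivative (nodal s v)).eval x = (nodal s v).eval x * ∑ i ∈ s, (x - v i)⁻¹ := by
  classical
  rw [derivative_nodal, eval_finsetSum, Finset.mul_sum]
  refine Finset.sum_congr rfl fun i hi => ?_
  rw [nodal_eq_mul_nodal_erase hi, eval_mul, eval_sub, eval_X, eval_C]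
  field_simp [sub_ne_zero.2 (hx i hi)]

variable {k : ι}

theorem eval_derivative_nodal_node_ne_zero (hv : Set.InjOn v s) (hk : k ∈ s) :
    (derivative (nodal s v)).eval (v k) ≠ 0 := by
  classical
  rw [eval_nodal_derivative_eval_node_eq hk]
  refine eval_nodal_not_at_node fun j hj hkj => ?_
  exact (Finset.mem_erase.1 hj).1 (hv (Finset.mem_erase.1 hj).2 hk hkj.symm)

theorem eval_derivative_derivative_nodal_node [DecidableEq ι] (hv : Set.InjOn v s) (hk : k ∈ s) :
    (derivative (derivative (nodal s v))).eval (v k) =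
      2 * (derivative (nodal s v)).eval (v k) * ∑ j ∈ s.erase k, (v k - v j)⁻¹ := by
  have hne : ∀ j ∈ s.erase k, v k ≠ v j := fun j hj hkj =>
    (Finset.mem_erase.1 hj).1 (hv (Finset.mem_erase.1 hj).2 hk hkj.symm)
  have hsecond : (derivative (derivative (nodal s v))).eval (v k) =
      2 * (derivative (nodal (s.erase k) v)).eval (v k) := by
    rw [nodal_eq_mul_nodal_erase hk]
    simp [two_mul]
  rw [hsecond, eval_derivative_nodal_of_forall_ne hne, eval_nodal_derivative_eval_node_eq hk,
    mul_assoc]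

theorem eval_derivative_ne_zero_of_natDegree_le_card {P : F[X]} (hP : P ≠ 0) (hv : Set.InjOn v s)
    (hdeg : P.natDegree ≤ s.card) (hroot : ∀ i ∈ s, P.eval (v i) = 0) (hk : k ∈ s) :
    (derivative P).eval (v k) ≠ 0 := by
  rw [eq_leadingCoeff_mul_nodal hv hdeg hroot, derivative_C_mul, eval_mul, eval_C]
  exact mul_ne_zero (leadingCoeff_ne_zero.2 hP) (eval_derivative_nodal_node_ne_zero hv hk)

theorem eval_derivative_derivative_div_of_natDegree_le_card [DecidableEq ι] {P : F[X]} (hP : P ≠ 0)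
    (hv : Set.InjOn v s) (hdeg : P.natDegree ≤ s.card) (hroot : ∀ i ∈ s, P.eval (v i) = 0)
    (hk : k ∈ s) :
    (derivative (derivative P)).eval (v k) / (derivative P).eval (v k) =
      2 * ∑ j ∈ s.erase k, (v k - v j)⁻¹ := by
  rw [eq_leadingCoeff_mul_nodal hv hdeg hroot]
  simp only [derivative_C_mul, eval_mul, eval_C]
  rw [mul_div_mul_left _ _ (leadingCoeff_ne_zero.2 hP),
    eval_derivative_derivative_nodal_node hv hk,
    div_eq_iff (eval_derivative_nodal_node_ne_zero hv hk)]
  ring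

end Nodal

section ImplicitDifferentiation

variable {𝕜 : Type*} [NontriviallyNormedField 𝕜]

theorem hasFDerivAt_of_eventually_apply_graph_eq {E₁ E₂ F : Type*}
    [NormedAddCommGroup E₁] [NormedSpace 𝕜 E₁] [CompleteSpace E₁]
    [NormedAddCommGroup E₂] [NormedSpace 𝕜 E₂] [CompleteSpace E₂]
    [NormedAddCommGroup F] [NormedSpace 𝕜 F] [CompleteSpace F]
    {f : E₁ × E₂ → F} {f' : E₁ × E₂ →L[𝕜] F} {g : E₁ → E₂} {a : E₁}
    (hf : HasStrictFDerivAt f f' (a, g a)) (hinv : (f' ∘L .inr 𝕜 E₁ E₂).IsInvertible)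
    (hg : ContinuousAt g a) (hfg : ∀ᶠ x in 𝓝 a, f (x, g x) = f (a, g a)) :
    HasFDerivAt g (-(f' ∘L .inr 𝕜 E₁ E₂).inverse ∘L (f' ∘L .inl 𝕜 E₁ E₂)) a := by
  have hgraph : Tendsto (fun x => (x, g x)) (𝓝 a) (𝓝 (a, g a)) := continuousAt_id.prodMk hg
  have himplicit := (hf.hasStrictFDerivAt_implicitFunctionOfProdDomain hinv).hasFDerivAt
  refine himplicit.congr_of_eventuallyEq ?_
  have hunique := hgraph.eventually (hf.eventually_apply_eq_iff_implicitFunctionOfProdDomain hinv)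
  filter_upwards [hunique, hfg] with x hiff hx
  exact (hiff.1 hx).symm

theorem hasDerivAt_of_eventually_apply_graph_eq [CompleteSpace 𝕜] {𝕜' : Type*}
    [NontriviallyNormedField 𝕜'] [NormedAlgebra 𝕜 𝕜'] [CompleteSpace 𝕜']
    {f : 𝕜 × 𝕜' → 𝕜'} {f' : 𝕜 × 𝕜' →L[𝕜] 𝕜'}
    {g : 𝕜 → 𝕜'} {a : 𝕜} {b c : 𝕜'} (hf : HasStrictFDerivAt f f' (a, g a))
    (hb : HasDerivAt (fun x => f (x, g a)) b a)
    (hc : HasDerivAt (fun y => f (a, y)) c (g a)) (hc0 : c ≠ 0)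
    (hg : ContinuousAt g a) (hfg : ∀ᶠ x in 𝓝 a, f (x, g x) = f (a, g a)) :
    HasDerivAt g (-b / c) a := by
  have hfst : f' (1, 0) = b :=
    (hf.hasFDerivAt.comp_hasDerivAt a
      ((hasDerivAt_id a).prodMk (hasDerivAt_const a (g a)))).unique hb
  let e : 𝕜' ≃L[𝕜] 𝕜' :=
    (ContinuousLinearEquiv.unitsEquivAut 𝕜' (Units.mk0 c hc0)).restrictScalars 𝕜
  have hsnd : f' ∘L .inr 𝕜 𝕜 𝕜' = e := by
    refine (hf.hasFDerivAt.comp (g a) (hasFDerivAt_prodMk_right a (g a))).unique ?_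
    convert! hc.hasFDerivAt.restrictScalars 𝕜
  have hg' := hasFDerivAt_of_eventually_apply_graph_eq hf ⟨e, hsnd.symm⟩ hg hfg
  convert! hg'.hasDerivAt using 1
  simp [hsnd, hfst, e, div_eq_mul_inv]

end ImplicitDifferentiation

theorem hasDerivAt_of_ofReal_comp {f : ℝ → ℝ} {f' t : ℝ}
    (hf : HasDerivAt (fun s => (f s : ℂ)) f' t) : HasDerivAt f f' t := by
  simpa using! Complex.reCLM.hasFDerivAt.comp_hasDerivAt t hf

section Trigonometric

open Polynomial

theorem deriv_eval_sin_sq (P : ℂ[X]) :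
    deriv (fun x => P.eval (Complex.sin x ^ 2)) =
      fun x => (derivative P).eval (Complex.sin x ^ 2) * Complex.sin (2 * x) := by
  funext x
  refine HasDerivAt.deriv ?_
  convert! (P.hasDerivAt (Complex.sin x ^ 2)).comp x ((Complex.hasDerivAt_sin x).pow 2) using 1
  rw [Complex.sin_two_mul]
  simp

theorem deriv_deriv_eval_sin_sq (P : ℂ[X]) :
    deriv (deriv fun x => P.eval (Complex.sin x ^ 2)) =
      fun x => (derivative (derivative P)).eval (Complex.sin x ^ 2) * Complex.sin (2 * x) ^ 2 +
        (derivative P).eval (Complex.sin x ^ 2) * (2 * Complex.cos (2 * x)) := by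
  funext x
  rw [deriv_eval_sin_sq, deriv_fun_mul (by fun_prop) (by fun_prop), deriv_eval_sin_sq]
  have hsin : HasDerivAt (fun y : ℂ => Complex.sin (2 * y)) (Complex.cos (2 * x) * 2) x :=
    (hasDerivAt_const_mul (2 : ℂ)).csin
  rw [hsin.deriv]
  ring

theorem deriv_deriv_div_deriv_eval_sin_sq {P : ℂ[X]} {x : ℂ}
    (hP : (derivative P).eval (Complex.sin x ^ 2) ≠ 0) (hx : Complex.sin (2 * x) ≠ 0) :
    deriv (deriv fun y => P.eval (Complex.sin y ^ 2)) x /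
        deriv (fun y => P.eval (Complex.sin y ^ 2)) x =
      2 * Complex.cot (2 * x) + Complex.sin (2 * x) *
        ((derivative (derivative P)).eval (Complex.sin x ^ 2) /
          (derivative P).eval (Complex.sin x ^ 2)) := by
  rw [deriv_deriv_eval_sin_sq, deriv_eval_sin_sq, Complex.cot_eq_cos_div_sin]
  field_simp
  ring

theorem injOn_sin_sq : Set.InjOn (fun x => Real.sin x ^ 2) (Set.Icc 0 (π / 2)) := by
  intro x hx y hy hxy
  have hsin : Real.sin x = Real.sin y :=
    (pow_left_inj₀ (Real.sin_nonneg_of_nonneg_of_le_pi hx.1 (by linarith [hx.2, Real.pi_pos]))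
      (Real.sin_nonneg_of_nonneg_of_le_pi hy.1 (by linarith [hy.2, Real.pi_pos])) two_ne_zero).1 hxy
  exact Real.injOn_sin ⟨by linarith [hx.1, Real.pi_pos], hx.2⟩
    ⟨by linarith [hy.1, Real.pi_pos], hy.2⟩ hsin

end Trigonometric

/-- The total magnetization `∑ⱼ σⱼ` of a spin configuration, the exponent variable of `CWZ`. -/
noncomputable def magnetization {n : ℕ} (σ : Fin n → Bool) : ℝ := ∑ j, spin (σ j)

theorem magnetization_not {n : ℕ} (σ : Fin n → Bool) :
    magnetization (fun j => !σ j) = -magnetization σ := by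
  have hspin : ∀ b, spin (!b) = -spin b := by
    intro b
    cases b <;> simp [spin]
  simp only [magnetization, hspin, Finset.sum_neg_distrib]

theorem exists_magnetization_eq_two_mul {n : ℕ} (heven : Even n) (σ : Fin n → Bool) :
    ∃ k : ℤ, k.natAbs ≤ n / 2 ∧ magnetization σ = 2 * k := by
  obtain ⟨m, rfl⟩ := heven
  refine ⟨((Finset.univ.filter fun j => σ j = true).card : ℤ) - m, ?_, ?_⟩
  · have hcard := Finset.card_filter_le Finset.univ fun j => σ j = true
    rw [Finset.card_univ, Fintype.card_fin] at hcard
    omega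
  · have hspin : ∀ b, spin b = 2 * (if b = true then 1 else 0) - 1 := by
      intro b
      cases b <;> norm_num [spin]
    simp only [magnetization, hspin, Finset.sum_sub_distrib, ← Finset.mul_sum, Finset.sum_boole,
      Finset.sum_const, Finset.card_univ, Fintype.card_fin, nsmul_eq_mul]
    push_cast
    ring

theorem CWZ_eq_sum_exp (n : ℕ) (t x : ℂ) :
    CWZ n t x = ∑ σ : Fin n → Bool,
      Complex.exp (t * magnetization σ ^ 2 + Complex.I * x * magnetization σ) :=
  rfl

theorem CWZ_eq_sum_cos (n : ℕ) (t x : ℂ) :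
    CWZ n t x = ∑ σ : Fin n → Bool,
      Complex.exp (t * magnetization σ ^ 2) * Complex.cos (x * magnetization σ) := by
  have hnot : CWZ n t x = ∑ σ : Fin n → Bool,
      Complex.exp (t * magnetization σ ^ 2 - Complex.I * x * magnetization σ) := by
    rw [CWZ_eq_sum_exp]
    refine Fintype.sum_equiv (Equiv.piCongrRight fun _ => Equiv.boolNot) _ _ fun σ => ?_
    change _ = Complex.exp (t * (magnetization fun j => !σ j) ^ 2
      - Complex.I * x * (magnetization fun j => !σ j))
    rw [magnetization_not, Complex.ofReal_neg, neg_sq, mul_neg, sub_neg_eq_add]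
  refine mul_left_cancel₀ (two_ne_zero (α := ℂ)) ?_
  rw [two_mul]
  nth_rw 2 [hnot]
  rw [CWZ_eq_sum_exp, ← Finset.sum_add_distrib, Finset.mul_sum]
  refine Finset.sum_congr rfl fun σ _ => ?_
  rw [mul_left_comm, Complex.two_cos, sub_eq_add_neg, Complex.exp_add, Complex.exp_add]
  ring_nf

theorem CWZ_ofReal_zero_ne_zero (n : ℕ) (t : ℝ) : CWZ n t 0 ≠ 0 := by
  have hreal : CWZ n t 0 = ((∑ σ : Fin n → Bool, Real.exp (t * magnetization σ ^ 2) : ℝ) : ℂ) := by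
    simp [CWZ_eq_sum_cos]
  rw [hreal, Complex.ofReal_ne_zero]
  exact (Finset.sum_pos (fun σ _ => Real.exp_pos _) Finset.univ_nonempty).ne'

theorem hasDerivAt_CWZ_time (n : ℕ) (t x : ℂ) :
    HasDerivAt (fun s => CWZ n s x) (-deriv (deriv (CWZ n t)) x) t := by
  have hspace : deriv (CWZ n t) = fun y => ∑ σ : Fin n → Bool,
      Complex.exp (t * magnetization σ ^ 2 + Complex.I * y * magnetization σ) *
        (Complex.I * magnetization σ) := by
    funext y
    simp only [funext (CWZ_eq_sum_exp n t)]
    refine (HasDerivAt.fun_sum fun σ _ => ?_).deriv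
    exact (((hasDerivAt_const_mul Complex.I).mul_const _).const_add _).cexp
  have hspace₂ : deriv (deriv (CWZ n t)) x = ∑ σ : Fin n → Bool,
      Complex.exp (t * magnetization σ ^ 2 + Complex.I * x * magnetization σ) *
        (Complex.I * magnetization σ) * (Complex.I * magnetization σ) := by
    rw [hspace]
    refine (HasDerivAt.fun_sum fun σ _ => ?_).deriv
    exact (((hasDerivAt_const_mul Complex.I).mul_const _).const_add _).cexp.mul_const _
  simp only [hspace₂, CWZ_eq_sum_exp, ← Finset.sum_neg_distrib]
  refine HasDerivAt.fun_sum fun σ _ => ?_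
  convert! ((hasDerivAt_mul_const _).add_const _).cexp using 1
  linear_combination (-Complex.exp (t * magnetization σ ^ 2 + Complex.I * x * magnetization σ) *
    magnetization σ ^ 2) * Complex.I_sq

theorem contDiff_CWZ (n : ℕ) : ContDiff ℂ 1 fun p : ℂ × ℂ => CWZ n p.1 p.2 := by
  simp only [CWZ_eq_sum_exp]
  fun_prop

open Polynomial in
theorem exists_polynomial_CWZ {n : ℕ} (heven : Even n) (t : ℂ) :
    ∃ P : ℂ[X], P.natDegree ≤ n / 2 ∧ CWZ n t = fun x => P.eval (Complex.sin x ^ 2) := by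
  choose k hk hmag using exists_magnetization_eq_two_mul heven
  refine ⟨∑ σ, C (Complex.exp (t * magnetization σ ^ 2)) *
    (Chebyshev.T ℂ (k σ)).comp (1 - 2 * X), ?_, ?_⟩
  · refine natDegree_sum_le_of_forall_le _ _ fun σ _ => ?_
    have hlin : (1 - 2 * X : ℂ[X]).natDegree ≤ 1 := by compute_degree
    calc _ ≤ ((Chebyshev.T ℂ (k σ)).comp (1 - 2 * X)).natDegree := natDegree_C_mul_le _ _
      _ ≤ (Chebyshev.T ℂ (k σ)).natDegree * (1 - 2 * X : ℂ[X]).natDegree := natDegree_comp_le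
      _ ≤ (k σ).natAbs * 1 := by
        rw [Chebyshev.natDegree_T]
        gcongr
      _ ≤ n / 2 := by simpa using hk σ
  · funext x
    have hcos : 1 - 2 * Complex.sin x ^ 2 = Complex.cos (2 * x) := by
      rw [Complex.cos_two_mul, Complex.cos_sq']
      ring
    simp only [CWZ_eq_sum_cos, eval_finsetSum, eval_mul, eval_C, eval_comp, eval_sub, eval_one,
      eval_X, eval_ofNat, hcos, Chebyshev.T_complex_cos]
    refine Finset.sum_congr rfl fun σ _ => ?_
    rw [hmag]
    push_cast
    ring_nf

theorem hasDerivAt_of_eventually_CWZ_eq_zero {n : ℕ} {z : ℝ → ℂ} {t : ℝ} (hz : ContinuousAt z t)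
    (hzero : ∀ᶠ r : ℝ in 𝓝 t, CWZ n r (z r) = 0) (hsimple : deriv (CWZ n t) (z t) ≠ 0) :
    HasDerivAt z (deriv (deriv (CWZ n t)) (z t) / deriv (CWZ n t) (z t)) t := by
  have hsmooth : ContDiff ℝ 1 fun p : ℝ × ℂ => CWZ n p.1 p.2 :=
    ((contDiff_CWZ n).restrict_scalars ℝ).comp (Complex.ofRealCLM.contDiff.prodMap contDiff_id)
  rw [← neg_neg (deriv (deriv (CWZ n t)) (z t))]
  refine hasDerivAt_of_eventually_apply_graph_eq
    (hsmooth.contDiffAt.hasStrictFDerivAt one_ne_zero) (hasDerivAt_CWZ_time n t (z t)).comp_ofReal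
    (differentiableAt_of_deriv_ne_zero hsimple).hasDerivAt hsimple hz ?_
  filter_upwards [hzero] with r hr
  exact hr.trans hzero.self_of_nhds.symm

theorem stmt18_general {n : ℕ} (heven : Even n) {ι : Type*} [DecidableEq ι] {s : Finset ι}
    (hs : n / 2 ≤ s.card) {z : ι → ℝ → ℂ} {t : ℝ} (hzero : ∀ j ∈ s, CWZ n t (z j t) = 0)
    (hinj : Set.InjOn (fun j => Complex.sin (z j t) ^ 2) s) {k : ι} (hk : k ∈ s)
    (hcont : ContinuousAt (z k) t) (hzk : ∀ᶠ r : ℝ in 𝓝 t, CWZ n r (z k r) = 0)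
    (hsin : Complex.sin (2 * z k t) ≠ 0) :
    HasDerivAt (z k)
      (2 * Complex.cot (2 * z k t)
        - 2 * Complex.sin (2 * z k t) *
          ∑ j ∈ s.erase k, (Complex.sin (z j t) ^ 2 - Complex.sin (z k t) ^ 2)⁻¹) t := by
  obtain ⟨P, hdeg, hZ⟩ := exists_polynomial_CWZ heven t
  have hP0 : P ≠ 0 := by
    rintro rfl
    exact CWZ_ofReal_zero_ne_zero n t (by simp [hZ])
  have hroot : ∀ j ∈ s, P.eval (Complex.sin (z j t) ^ 2) = 0 := fun j hj => by
    simpa only [hZ] using hzero j hj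
  have hP' := eval_derivative_ne_zero_of_natDegree_le_card hP0 hinj (hdeg.trans hs) hroot hk
  have hP'' :=
    eval_derivative_derivative_div_of_natDegree_le_card hP0 hinj (hdeg.trans hs) hroot hk
  have hsimple : deriv (CWZ n t) (z k t) ≠ 0 := by
    rw [hZ, deriv_eval_sin_sq]
    exact mul_ne_zero hP' hsin
  convert! hasDerivAt_of_eventually_CWZ_eq_zero hcont hzk hsimple using 1
  rw [hZ, deriv_deriv_div_deriv_eval_sin_sq hP' hsin, hP'']
  simp only [← neg_sub (Complex.sin (z k t) ^ 2), inv_neg, Finset.sum_neg_distrib]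
  ring

theorem stmt18 (n : ℕ) (hn : 0 < n) (heven : Even n)
    (x : ℕ → ℝ → ℝ)
    (hcont : ∀ k ∈ Finset.Icc 1 (n / 2), ContinuousOn (x k) (Set.Ioi 0))
    (hzeros : ∀ t : ℝ, 0 < t →
      (∀ k ∈ Finset.Icc 1 (n / 2), 0 < x k t ∧ x k t < π / 2) ∧
      (∀ k, 1 ≤ k → k < n / 2 → x k t < x (k + 1) t) ∧
      {z : ℝ | z ∈ Set.Ioo 0 (π / 2) ∧ CWZ n t z = 0}
        = (fun k => x k t) '' Set.Icc 1 (n / 2)) :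
    ∀ k ∈ Finset.Icc 1 (n / 2), ∀ t : ℝ, 0 < t →
      HasDerivAt (x k)
        (2 * Real.cot (2 * x k t)
          - 2 * Real.sin (2 * x k t) *
            ∑ j ∈ (Finset.Icc 1 (n / 2)).erase k,
              (Real.sin (x j t) ^ 2 - Real.sin (x k t) ^ 2)⁻¹) t := by
  intro k hk t ht
  obtain ⟨hrange, hlt, -⟩ := hzeros t ht
  have hzero : ∀ r : ℝ, 0 < r → ∀ j ∈ Finset.Icc 1 (n / 2), CWZ n r (x j r) = 0 :=
    fun r hr j hj => ((hzeros r hr).2.2.ge ⟨j, Finset.mem_Icc.1 hj, rfl⟩).2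
  have hmono : StrictMonoOn (fun j => x j t) (Set.Icc 1 (n / 2)) :=
    strictMonoOn_of_lt_succ Set.ordConnected_Icc fun j _ hj hj' =>
      hlt j hj.1 (Nat.succ_le_iff.1 hj'.2)
  have hsq : Set.InjOn (fun j => Real.sin (x j t) ^ 2) (Finset.Icc 1 (n / 2)) :=
    injOn_sin_sq.comp (by simpa using hmono.injOn) fun j hj =>
      ⟨(hrange j hj).1.le, (hrange j hj).2.le⟩
  have hsin : Real.sin (2 * x k t) ≠ 0 :=
    (Real.sin_pos_of_pos_of_lt_pi (by linarith [hrange k hk]) (by linarith [hrange k hk])).ne'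
  have hderiv := stmt18_general heven (by simp) (z := fun j r => x j r) (hzero t ht)
    (by exact_mod_cast Complex.ofReal_injective.comp_injOn hsq) hk
    (Complex.continuous_ofReal.continuousAt.comp ((hcont k hk).continuousAt (Ioi_mem_nhds ht)))
    ((eventually_gt_nhds ht).mono fun r hr => hzero r hr k hk) (by exact_mod_cast hsin)
  exact hasDerivAt_of_ofReal_comp (by exact_mod_cast hderiv)
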